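/- Let P ⊆ ℝ^d be a closed polyhedron (a finite intersection of closed halfspaces) with nonempty interior such that the origin lies on the boundary of P. Let Z be a (d−2)-dimensional linear subspace that does not intersect the interior of P, and fix an orthonormal basis u, w of the 2-dimensional orthogonal complement Z^⊥. Define the angle θ : ℝ^d → [−π, π) by θ(x) = the polar angle of (⟨x,u⟩, ⟨x,w⟩), and assume: (1) there exist a, b ∈ (−π, π) with a < 0 < b such that θ(P) = [a, b]; (2) the set P ∩ { x : a ≤ θ(x) ≤ 0 } is bounded. Let f : P → ℝ be continuous and set K_t = { x ∈ P : θ(x) ∈ [−π, t] }. Then the function g(t) = ∫_{K_t} f(x) dx is differentiable at t = 0. -/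

import Mathlib

open MeasureTheory Finset
open scoped ProbabilityTheory
open scoped RealInnerProductSpace

noncomputable section

abbrev Euc (d : ℕ) := EuclideanSpace ℝ (Fin d)

section GeneralSpace

variable {V : Type*} [NormedAddCommGroup V] [NormedSpace ℝ V]

/-- The dimension of a set: the rank of the direction of its affine span. -/
noncomputable def sdim (F : Set V) : ℕ := Module.finrank ℝ (affineSpan ℝ F).direction

/-- `F` is a simplex with `n` vertices (an `(n-1)`-dimensional simplex). -/
def IsSimplexWith (n : ℕ) (F : Set V) : Prop :=
  ∃ w : Fin n → V, AffineIndependent ℝ w ∧ F = convexHull ℝ (Set.range w)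

/-- A polytope is the convex hull of finitely many points. -/
def IsPolytope (P : Set V) : Prop := ∃ S : Finset V, P = convexHull ℝ (S : Set V)

/-- A facet of a `d`-dimensional polytope: an exposed face of dimension `d - 1`. -/
def IsFacetOf (d : ℕ) (P F : Set V) : Prop := IsExposed ℝ P F ∧ sdim F = d - 1

/-- A `d`-dimensional simplicial polytope: a polytope of dimension `d`, each facet of which
is a `(d-1)`-dimensional simplex (i.e. has `d` affinely independent vertices). -/
def IsSimplicialPolytope (d : ℕ) (P : Set V) : Prop :=
  IsPolytope P ∧ sdim P = d ∧ ∀ F : Set V, IsFacetOf d P F → IsSimplexWith d F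

end GeneralSpace

/-- A convex body: compact, convex, with nonempty interior. -/
def IsConvexBody {d : ℕ} (K : Set (Euc d)) : Prop :=
  IsCompact K ∧ Convex ℝ K ∧ (interior K).Nonempty

/-- The barycenter `μ_K` of the uniform distribution on `K`. -/
noncomputable def centroid {d : ℕ} (K : Set (Euc d)) : Euc d :=
  (volume K).toReal⁻¹ • ∫ x in K, x

/-- The covariance matrix `A(K)` of the uniform distribution on `K`. -/
noncomputable def covMatrix {d : ℕ} (K : Set (Euc d)) : Matrix (Fin d) (Fin d) ℝ :=
  Matrix.of fun i j =>
    (volume K).toReal⁻¹ * ∫ x in K, (x i - centroid K i) * (x j - centroid K j)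

/-- The isotropic constant `L_K`, defined by `L_K ^ (2d) = det A(K) / vol(K) ^ 2`. -/
noncomputable def isoConst {d : ℕ} (K : Set (Euc d)) : ℝ :=
  ((covMatrix K).det / (volume K).toReal ^ 2) ^ ((2 * (d : ℝ))⁻¹)

/-- `K` is isotropic: its barycenter is the origin and its covariance matrix is the identity. -/
def IsIsotropic {d : ℕ} (K : Set (Euc d)) : Prop :=
  centroid K = 0 ∧ covMatrix K = 1

/-- `P` is a local extremum (local maximum or local minimum) of `K ↦ L_K` among convex bodies,
with respect to the Hausdorff metric. -/
def IsLocalExtremumOfIsoConst {d : ℕ} (P : Set (Euc d)) : Prop :=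
  (∃ ε > 0, ∀ K : Set (Euc d), IsConvexBody K →
      Metric.hausdorffDist K P < ε → isoConst K ≤ isoConst P) ∨
  (∃ ε > 0, ∀ K : Set (Euc d), IsConvexBody K →
      Metric.hausdorffDist K P < ε → isoConst P ≤ isoConst K)

/-- The polar angle of `(a, b) ∈ ℝ²`, normalized to lie in `[-π, π)`. -/
noncomputable def polarAngle (a b : ℝ) : ℝ :=
  if Complex.arg ⟨a, b⟩ = Real.pi then -Real.pi else Complex.arg ⟨a, b⟩

/-!
Off the hyperplane `⟪x, w⟫ = 0`, the condition `θ x ≤ t` reads `⟪x, w⟫ ≤ tan t * max ⟪x, u⟫ 0`, so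
`g` is the composition with `tan` of `T ↦ ∫ f` over the part of `P` below the hinged graph
`⟪x, w⟫ = T * max ⟪x, u⟫ 0`. A half-space `⟪x, w⟫ ≤ 0` meeting a closed convex set in a bounded set
still does so after a small tilt, hence `P` may be replaced by a compact convex set `K`. By Fubini
along `w`, the derivative at `T = 0` of the integral over the line through `y ∈ wᗮ` is
`max ⟪y, u⟫ 0 • f y`, provided that the extension of `f` by zero outside `K` is continuous at `y`.
This holds for almost every `y`, because `wᗮ` meets the interior of `K` and therefore its frontier
in a null set of `wᗮ`. Differentiation under the integral sign concludes.
-/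

lemma neg_pi_le_polarAngle (p q : ℝ) : -Real.pi ≤ polarAngle p q := by
  unfold polarAngle
  split_ifs
  exacts [le_rfl, (Complex.neg_pi_lt_arg _).le]

lemma polarAngle_of_snd_ne_zero (p : ℝ) {q : ℝ} (hq : q ≠ 0) :
    polarAngle p q = Complex.arg ⟨p, q⟩ :=
  if_neg fun h => hq (Complex.arg_eq_pi_iff.1 h).2

lemma polarAngle_snd_zero_nonpos (p : ℝ) : polarAngle p 0 ≤ 0 := by
  unfold polarAngle
  split_ifs with h
  · exact neg_nonpos.2 Real.pi_pos.le
  · exact not_lt.1 fun hpos => h (Complex.arg_eq_pi_iff.2 ⟨not_le.1 fun hp =>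
      hpos.ne' (Complex.arg_eq_zero_iff.2 ⟨hp, rfl⟩), rfl⟩)

lemma polarAngle_nonpos_iff {p q : ℝ} : polarAngle p q ≤ 0 ↔ q ≤ 0 := by
  rcases eq_or_ne q 0 with rfl | hq
  · exact iff_of_true (polarAngle_snd_zero_nonpos p) le_rfl
  rw [polarAngle_of_snd_ne_zero p hq]
  constructor
  · contrapose!
    exact fun h => (Complex.arg_nonneg_iff.2 h.le).lt_of_ne'
      fun h0 => hq (Complex.arg_eq_zero_iff.1 h0).2
  · exact fun h => (Complex.arg_neg_iff.2 (h.lt_of_ne hq)).le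

lemma snd_neg_of_polarAngle_mem_Ioo {p q : ℝ} (h : polarAngle p q ∈ Set.Ioo (-Real.pi) 0) :
    q < 0 := by
  refine (polarAngle_nonpos_iff.1 h.2.le).lt_of_ne ?_
  rintro rfl
  unfold polarAngle at h
  split_ifs at h with hpi
  · exact h.1.false
  · exact (Complex.arg_neg_iff.1 h.2).false

lemma polarAngle_le_iff {p q t : ℝ} (hq : q ≠ 0) (ht : |t| < Real.pi / 2) :
    polarAngle p q ≤ t ↔ q ≤ Real.tan t * max p 0 := by
  have ht' := abs_lt.1 ht
  rw [polarAngle_of_snd_ne_zero p hq]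
  rcases lt_or_ge 0 p with hp | hp
  · have harg := abs_lt.1 (Complex.abs_arg_lt_pi_div_two_iff (z := ⟨p, q⟩) |>.2 (Or.inl hp))
    rw [max_eq_left hp.le, ← div_le_iff₀ hp, ← Complex.tan_arg ⟨p, q⟩]
    exact (Real.strictMonoOn_tan.le_iff_le harg ht').symm
  · rw [max_eq_right hp, mul_zero]
    constructor
    · intro h
      rcases Complex.arg_lt_pi_div_two_iff.1 (h.trans_lt ht'.2) with hp' | hq' | h0
      exacts [absurd hp' hp.not_gt, hq'.le, absurd (congrArg Complex.im h0) hq]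
    · intro h
      refine (not_lt.1 fun hlt => ?_ : Complex.arg ⟨p, q⟩ ≤ t)
      rcases Complex.neg_pi_div_two_lt_arg_iff.1 (ht'.1.trans hlt) with hp' | hq'
      exacts [hp'.not_ge hp, hq (le_antisymm h hq')]

-- Scaling towards `x₀` moves far points onto a sphere, on which `|ℓ|` is bounded away from `0`.
lemma exists_isBounded_inter_abs_le_mul_norm {E : Type*} [NormedAddCommGroup E] [NormedSpace ℝ E]
    [ProperSpace E] {P : Set E} (hclosed : IsClosed P) {x₀ : E} (hstar : StarConvex ℝ x₀ P)
    {ℓ : E →L[ℝ] ℝ} (hx₀ : ℓ x₀ = 0) (hbdd : Bornology.IsBounded (P ∩ {x | ℓ x = 0})) :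
    ∃ τ > 0, Bornology.IsBounded (P ∩ {x | |ℓ x| ≤ τ * ‖x‖}) := by
  obtain ⟨R, hR, hsub⟩ := hbdd.subset_ball_lt 0 x₀
  obtain ⟨δ, hδ, hδle⟩ : ∃ δ, 0 < δ ∧ ∀ y ∈ Metric.sphere x₀ R ∩ P, δ ≤ |ℓ y| := by
    refine ((isCompact_sphere x₀ R).inter_right hclosed).exists_forall_le'
      (f := fun y => |ℓ y|) (by fun_prop) fun y hy => abs_pos.2 fun hy0 => ?_
    exact (Metric.mem_ball.1 (hsub ⟨hy.2, hy0⟩)).ne hy.1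
  refine ⟨δ / (2 * (R + ‖x₀‖)), by positivity, Metric.isBounded_closedBall.subset
    (t := Metric.closedBall x₀ R) fun x ⟨hxP, hx⟩ => ?_⟩
  rw [mem_closedBall_iff_norm]
  by_contra! hlt
  set r := ‖x - x₀‖
  have hr : 0 < r := hR.trans hlt
  set y := x₀ + (R / r) • (x - x₀)
  have hyP : y ∈ P := hstar.add_smul_sub_mem hxP (by positivity) ((div_le_one hr).2 hlt.le)
  have hyR : y ∈ Metric.sphere x₀ R := by
    rw [mem_sphere_iff_norm, add_sub_cancel_left, norm_smul, Real.norm_of_nonneg (by positivity),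
      div_mul_cancel₀ _ hr.ne']
  have hnorm : R / r * ‖x‖ ≤ R + ‖x₀‖ :=
    calc R / r * ‖x‖ ≤ R / r * (r + ‖x₀‖) := by
          gcongr
          simpa only [sub_add_cancel] using norm_add_le (x - x₀) x₀
      _ = R + R / r * ‖x₀‖ := by rw [mul_add, div_mul_cancel₀ _ hr.ne']
      _ ≤ R + ‖x₀‖ := by
          gcongr
          exact mul_le_of_le_one_left (norm_nonneg _) ((div_le_one hr).2 hlt.le)
  have : δ ≤ δ / 2 :=
    calc δ ≤ |ℓ y| := hδle y ⟨hyR, hyP⟩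
      _ = R / r * |ℓ x| := by
          rw [map_add, map_smul, map_sub, hx₀, zero_add, sub_zero, smul_eq_mul, abs_mul,
            abs_of_pos (by positivity)]
      _ ≤ R / r * (δ / (2 * (R + ‖x₀‖)) * ‖x‖) := by gcongr; exact hx
      _ = δ / (2 * (R + ‖x₀‖)) * (R / r * ‖x‖) := by ring
      _ ≤ δ / (2 * (R + ‖x₀‖)) * (R + ‖x₀‖) := by gcongr
      _ = δ / 2 := by field_simp
  linarith

lemma exists_eventually_inter_inner_le_mul_subset_closedBall {E : Type*}
    [NormedAddCommGroup E] [InnerProductSpace ℝ E] [ProperSpace E] {P : Set E}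
    (hclosed : IsClosed P) {x₀ : E} (hstar : StarConvex ℝ x₀ P) {w : E} (hx₀w : ⟪x₀, w⟫ = 0)
    (hbdd : Bornology.IsBounded (P ∩ {x | ⟪x, w⟫ ≤ 0})) (u : E) :
    ∃ R > 0, ∀ᶠ T in nhds (0 : ℝ),
      P ∩ {x | ⟪x, w⟫ ≤ T * max ⟪x, u⟫ 0} ⊆ Metric.closedBall x₀ R := by
  obtain ⟨τ, hτ, hwedge⟩ := exists_isBounded_inter_abs_le_mul_norm hclosed hstar
    (ℓ := innerSL ℝ w) (by rw [innerSL_apply_apply, real_inner_comm, hx₀w])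
    (hbdd.subset fun x hx => ⟨hx.1, by
      rw [Set.mem_ofPred_eq, real_inner_comm]
      exact hx.2.le⟩)
  obtain ⟨R, hR, hsub⟩ := (hbdd.union hwedge).subset_ball_lt 0 x₀
  have hsmall : ∀ᶠ T in nhds (0 : ℝ), |T| * ‖u‖ < τ :=
    ContinuousAt.eventually_lt (by fun_prop) continuousAt_const (by simpa using hτ)
  refine ⟨R, hR, hsmall.mono fun T hT x ⟨hxP, hx⟩ => Metric.ball_subset_closedBall (hsub ?_)⟩
  rcases le_or_gt ⟪x, w⟫ 0 with hxw | hxw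
  · exact .inl ⟨hxP, hxw⟩
  · refine .inr ⟨hxP, ?_⟩
    calc |⟪w, x⟫| = ⟪x, w⟫ := by rw [real_inner_comm, abs_of_pos hxw]
      _ ≤ T * max ⟪x, u⟫ 0 := hx
      _ ≤ |T| * (‖x‖ * ‖u‖) := by
          gcongr
          · exact le_abs_self T
          · exact max_le (real_inner_le_norm x u) (by positivity)
      _ = |T| * ‖u‖ * ‖x‖ := by ring
      _ ≤ τ * ‖x‖ := by gcongr

section Convex

variable {E : Type*} [NormedAddCommGroup E]

lemma exists_mem_interior_eq_zero_of_convex [NormedSpace ℝ E] {P : Set E} (hP : Convex ℝ P)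
    (hint : (interior P).Nonempty) (ℓ : E →L[ℝ] ℝ) (hneg : ∃ x ∈ P, ℓ x < 0)
    (hpos : ∃ x ∈ P, 0 < ℓ x) : ∃ z ∈ interior P, ℓ z = 0 := by
  have hcl : P ⊆ closure (interior P) :=
    hP.closure_interior_eq_closure_of_nonempty_interior hint ▸ subset_closure
  obtain ⟨x, hx, hxneg⟩ := hneg
  obtain ⟨y, hy, hypos⟩ := hpos
  obtain ⟨x', hx'neg, hx'⟩ := mem_closure_iff.1 (hcl hx) {z | ℓ z < 0}
    (isOpen_lt (by fun_prop) continuous_const) hxneg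
  obtain ⟨y', hy'pos, hy'⟩ := mem_closure_iff.1 (hcl hy) {z | 0 < ℓ z}
    (isOpen_lt continuous_const (by fun_prop)) hypos
  exact hP.interior.isPreconnected.intermediate_value hx' hy' ℓ.continuous.continuousOn
    ⟨le_of_lt hx'neg, le_of_lt hy'pos⟩

-- The slice is contained in the closure of the slice of the interior, and the latter is an open
-- convex set, hence has null frontier.
lemma ae_notMem_frontier_of_convex [NormedSpace ℝ E] {H : Type*} [NormedAddCommGroup H]
    [NormedSpace ℝ H] [FiniteDimensional ℝ H] [MeasurableSpace H] [BorelSpace H]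
    (μ : Measure H) [μ.IsAddHaarMeasure] {P : Set E} (hP : Convex ℝ P) (L : H →L[ℝ] E) {y₀ : H}
    (hy₀ : L y₀ ∈ interior P) : ∀ᵐ y ∂μ, L y ∉ frontier P := by
  have hopen : IsOpen (L ⁻¹' interior P) := isOpen_interior.preimage L.continuous
  have hnull := (hP.interior.linear_preimage L.toLinearMap).addHaar_frontier μ
  filter_upwards [compl_mem_ae_iff.2 hnull] with y hy hyP
  have hseg : openSegment ℝ y₀ y ⊆ L ⁻¹' interior P := by
    rw [← Set.image_subset_iff]
    exact (image_openSegment ℝ L.toLinearMap.toAffineMap y₀ y).trans_subset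
      (hP.openSegment_interior_closure_subset_interior hy₀ hyP.1)
  have hcl : y ∈ closure (L ⁻¹' interior P) :=
    closure_mono hseg (segment_subset_closure_openSegment (right_mem_segment ℝ y₀ y))
  exact hy ⟨hcl, fun hyint => hyP.2 (hopen.interior_eq.subset hyint)⟩

lemma isClosed_iInter_inner_le [InnerProductSpace ℝ E] {ι : Sort*} (α : ι → E) (c : ι → ℝ) :
    IsClosed (⋂ i, {x : E | ⟪α i, x⟫ ≤ c i}) :=
  isClosed_iInter fun _ => isClosed_le (by fun_prop) continuous_const

lemma convex_iInter_inner_le [InnerProductSpace ℝ E] {ι : Sort*} (α : ι → E) (c : ι → ℝ) :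
    Convex ℝ (⋂ i, {x : E | ⟪α i, x⟫ ≤ c i}) :=
  convex_iInter fun i => convex_halfSpace_le (innerₛₗ ℝ (α i)).isLinear _

end Convex

section SubgraphIntegral

variable {G : Type*} [NormedAddCommGroup G] [NormedSpace ℝ G]

lemma lipschitzWith_integral_Iic {φ : ℝ → G} (hφ : Integrable φ) {C : NNReal}
    (hC : ∀ q, ‖φ q‖ ≤ C) : LipschitzWith C fun s => ∫ q in Set.Iic s, φ q := by
  refine LipschitzWith.of_dist_le_mul fun s r => ?_
  rw [dist_eq_norm, intervalIntegral.integral_Iic_sub_Iic hφ.integrableOn hφ.integrableOn]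
  exact intervalIntegral.norm_integral_le_of_norm_le_const fun q _ => hC q

variable [CompleteSpace G]

lemma hasDerivAt_integral_Iic {φ : ℝ → G} (hφ : Integrable φ) {a : ℝ} (ha : ContinuousAt φ a) :
    HasDerivAt (fun s => ∫ q in Set.Iic s, φ q) (φ a) a := by
  have h := intervalIntegral.integral_hasDerivAt_right (hφ.intervalIntegrable (a := a))
    hφ.aestronglyMeasurable.stronglyMeasurableAtFilter ha
  refine (h.const_add (∫ q in Set.Iic a, φ q)).congr_of_eventuallyEq (.of_forall fun s => ?_)
  exact sub_eq_iff_eq_add'.1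
    (intervalIntegral.integral_Iic_sub_Iic hφ.integrableOn hφ.integrableOn)

lemma hasDerivAt_setIntegral_prod_le_mul {α : Type*} [MeasurableSpace α] {μ : Measure α}
    [SFinite μ] {F : α × ℝ → G} (hF : Integrable F (μ.prod volume))
    (hF0 : AEStronglyMeasurable (fun y => F (y, 0)) μ) {p B : α → ℝ} (hp : Measurable p)
    (hB : ∀ᵐ y ∂μ, ∀ q, ‖F (y, q)‖ ≤ B y) (hBp : Integrable (fun y => B y * p y) μ)
    (hcont : ∀ᵐ y ∂μ, ContinuousAt (fun q => F (y, q)) 0) :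
    HasDerivAt (fun T : ℝ => ∫ z in {z : α × ℝ | z.2 ≤ T * p z.1}, F z ∂(μ.prod volume))
      (∫ y, p y • F (y, 0) ∂μ) 0 := by
  have hS (T : ℝ) : MeasurableSet {z : α × ℝ | z.2 ≤ T * p z.1} :=
    measurableSet_le measurable_snd ((hp.comp measurable_fst).const_mul T)
  have hFS (T : ℝ) := hF.indicator (hS T)
  have hslice (T : ℝ) (y : α) : ∫ q, {z : α × ℝ | z.2 ≤ T * p z.1}.indicator F (y, q) =
      ∫ q in Set.Iic (T * p y), F (y, q) :=
    integral_indicator (f := fun q => F (y, q)) (measurableSet_Iic (a := T * p y))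
  have hfubini (T : ℝ) : ∫ z in {z : α × ℝ | z.2 ≤ T * p z.1}, F z ∂(μ.prod volume) =
      ∫ y, (∫ q in Set.Iic (T * p y), F (y, q)) ∂μ := by
    rw [← integral_indicator (hS T), integral_prod _ (hFS T)]
    exact integral_congr_ae (.of_forall (hslice T))
  have hint (T : ℝ) : Integrable (fun y => ∫ q in Set.Iic (T * p y), F (y, q)) μ :=
    (hFS T).integral_prod_left.congr (.of_forall (hslice T))
  simp_rw [hfubini]
  refine (hasDerivAt_integral_of_dominated_loc_of_lip (bound := fun y => B y * p y)
    Filter.univ_mem (.of_forall fun T => (hint T).aestronglyMeasurable) (hint 0)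
    (hp.aestronglyMeasurable.smul hF0) ?_ hBp ?_).2
  · filter_upwards [hF.prod_right_ae, hB] with y hFy hBy
    have hlip := lipschitzWith_integral_Iic hFy (C := Real.nnabs (B y))
      fun q => (hBy q).trans (le_abs_self _)
    have hmul : LipschitzWith (Real.nnabs (p y)) fun T : ℝ => T * p y :=
      LipschitzWith.of_dist_le_mul fun S T => by
        rw [Real.dist_eq, ← sub_mul, abs_mul, mul_comm, Real.dist_eq, Real.coe_nnabs]
    rw [map_mul]
    exact (hlip.comp hmul).lipschitzOnWith
  · filter_upwards [hF.prod_right_ae, hcont] with y hFy hy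
    have hmul : HasDerivAt (fun T : ℝ => T * p y) (p y) 0 := hasDerivAt_mul_const (p y)
    exact HasDerivAt.scomp_of_eq 0 (hasDerivAt_integral_Iic hFy hy) hmul (zero_mul _).symm

end SubgraphIntegral

section Hinge

variable {E : Type*} [NormedAddCommGroup E] [InnerProductSpace ℝ E] [FiniteDimensional ℝ E]
  [MeasurableSpace E] [BorelSpace E]

/-- The decomposition of a space into a hyperplane and the line spanned by its unit normal `w`, as
the map `(y, q) ↦ y + q • w`. -/
def orthogonalSpanProdEquiv (w : E) (hw : ‖w‖ = 1) : (ℝ ∙ w)ᗮ × ℝ ≃ᵐ E :=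
  MeasurableEquiv.prodComm.trans <|
    ((LinearIsometryEquiv.toSpanUnitSingleton w hw).toMeasurableEquiv.prodCongr (.refl _)).trans <|
    (MeasurableEquiv.toLp 2 _).trans (ℝ ∙ w).orthogonalDecomposition.symm.toMeasurableEquiv

lemma orthogonalSpanProdEquiv_apply {w : E} (hw : ‖w‖ = 1) (z : (ℝ ∙ w)ᗮ × ℝ) :
    orthogonalSpanProdEquiv w hw z = z.1 + z.2 • w := by
  simp [orthogonalSpanProdEquiv, MeasurableEquiv.prodComm, MeasurableEquiv.prodCongr, add_comm]

lemma inner_orthogonalSpanProdEquiv {w : E} (hw : ‖w‖ = 1) (z : (ℝ ∙ w)ᗮ × ℝ) :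
    ⟪orthogonalSpanProdEquiv w hw z, w⟫ = z.2 := by
  rw [orthogonalSpanProdEquiv_apply, inner_add_left, real_inner_smul_left,
    real_inner_self_eq_norm_sq, hw, Submodule.mem_orthogonal_singleton_iff_inner_left.1 z.1.2]
  ring

lemma measurePreserving_orthogonalSpanProdEquiv {w : E} (hw : ‖w‖ = 1) :
    MeasurePreserving (orthogonalSpanProdEquiv w hw) :=
  Measure.measurePreserving_swap.trans <|
    ((LinearIsometryEquiv.toSpanUnitSingleton w hw).measurePreserving.prod (.id _)).trans <|
    (WithLp.volume_preserving_toLp _ _).trans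
      (ℝ ∙ w).orthogonalDecomposition.symm.measurePreserving

variable {G : Type*} [NormedAddCommGroup G]

lemma norm_indicator_orthogonalSpanProdEquiv_le {w : E} (hw : ‖w‖ = 1) {K : Set E} {f : E → G}
    {C : ℝ} (hC0 : 0 ≤ C) (hC : ∀ x ∈ K, ‖f x‖ ≤ C) (y : (ℝ ∙ w)ᗮ) (q : ℝ) :
    ‖K.indicator f (orthogonalSpanProdEquiv w hw (y, q))‖ ≤
      ((ℝ ∙ w)ᗮ.orthogonalProjectionOnto '' K).indicator (fun _ => C) y := by
  by_cases hx : orthogonalSpanProdEquiv w hw (y, q) ∈ K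
  · have hy : y ∈ (ℝ ∙ w)ᗮ.orthogonalProjectionOnto '' K := by
      refine ⟨_, hx, ?_⟩
      rw [orthogonalSpanProdEquiv_apply, map_add, map_smul,
        Submodule.orthogonalProjectionOnto_mem_subspace_eq_self,
        Submodule.orthogonalProjectionOnto_orthogonalComplement_singleton_eq_zero, smul_zero,
        add_zero]
    rw [Set.indicator_of_mem hx, Set.indicator_of_mem hy]
    exact hC _ hx
  · rw [Set.indicator_of_notMem hx, norm_zero]
    exact Set.indicator_nonneg (fun _ _ => hC0) y

lemma ae_continuousAt_indicator_orthogonalSpanProdEquiv {K : Set E} (hconv : Convex ℝ K) {w : E}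
    (hw : ‖w‖ = 1) {x₀ : E} (hx₀ : x₀ ∈ interior K) (hx₀w : ⟪x₀, w⟫ = 0) {f : E → G}
    (hf : ContinuousOn f K) :
    ∀ᵐ y : (ℝ ∙ w)ᗮ,
      ContinuousAt (fun q => K.indicator f (orthogonalSpanProdEquiv w hw (y, q))) 0 := by
  filter_upwards [ae_notMem_frontier_of_convex volume hconv (ℝ ∙ w)ᗮ.subtypeL
    (y₀ := ⟨x₀, Submodule.mem_orthogonal_singleton_iff_inner_left.2 hx₀w⟩) hx₀] with y hy
  simp_rw [orthogonalSpanProdEquiv_apply]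
  refine ContinuousAt.comp_of_eq (y := (y : E))
    ((hf.mono interior_subset).continuousAt_indicator hy) (by fun_prop) ?_
  rw [zero_smul, add_zero]

variable [NormedSpace ℝ G] [CompleteSpace G]

lemma hasDerivAt_setIntegral_inner_le_mul_of_isCompact {K : Set E} (hK : IsCompact K)
    (hconv : Convex ℝ K) {w : E} (hw : ‖w‖ = 1) {x₀ : E} (hx₀ : x₀ ∈ interior K)
    (hx₀w : ⟪x₀, w⟫ = 0) {p : E → ℝ} (hp : Continuous p) (hpw : ∀ x (q : ℝ), p (x + q • w) = p x)
    {f : E → G} (hf : ContinuousOn f K) :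
    HasDerivAt (fun T : ℝ => ∫ x in K ∩ {x | ⟪x, w⟫ ≤ T * p x}, f x)
      (∫ y in {y : (ℝ ∙ w)ᗮ | (y : E) ∈ K}, p y • f y) 0 := by
  let H := (ℝ ∙ w)ᗮ
  let e := orthogonalSpanProdEquiv w hw
  have he : MeasurePreserving e := measurePreserving_orthogonalSpanProdEquiv hw
  have hKmeas := hK.measurableSet
  have hpre (T : ℝ) : e ⁻¹' {x | ⟪x, w⟫ ≤ T * p x} = {z : H × ℝ | z.2 ≤ T * p z.1} := by
    ext z
    change ⟪e z, w⟫ ≤ T * p (e z) ↔ _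
    rw [inner_orthogonalSpanProdEquiv, orthogonalSpanProdEquiv_apply, hpw]
    rfl
  have hKH : MeasurableSet {y : H | (y : E) ∈ K} := hKmeas.preimage measurable_subtype_coe
  have hF : Integrable (fun z : H × ℝ => K.indicator f (e z)) (Measure.prod volume volume) :=
    (he.integrable_comp_emb e.measurableEmbedding).2
      ((integrable_indicator_iff hKmeas).2 (hf.integrableOn_compact hK))
  have hF0 (y : H) :
      K.indicator f (e (y, 0)) = {y : H | (y : E) ∈ K}.indicator (fun y => f y) y := by
    rw [orthogonalSpanProdEquiv_apply, zero_smul, add_zero]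
    rfl
  have hF0meas : AEStronglyMeasurable (fun y : H => K.indicator f (e (y, 0))) := by
    rw [funext hF0]
    exact (aestronglyMeasurable_indicator_iff hKH).2 <|
      (hf.comp continuous_subtype_val.continuousOn fun _ hy => hy).aestronglyMeasurable hKH
  obtain ⟨C, hC⟩ := hK.exists_bound_of_continuousOn hf
  have hC0 : 0 ≤ C := (norm_nonneg _).trans (hC x₀ (interior_subset hx₀))
  have hQ : IsCompact (H.orthogonalProjectionOnto '' K) := hK.image (by fun_prop)
  have hBp : Integrable fun y : H =>
      (H.orthogonalProjectionOnto '' K).indicator (fun _ => C) y * p y :=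
    ((ContinuousOn.integrableOn_compact hQ (by fun_prop)).integrable_indicator
      hQ.measurableSet).congr (.of_forall fun _ => Set.indicator_mul_left _ _ _)
  convert hasDerivAt_setIntegral_prod_le_mul hF hF0meas (p := fun y : H => p y) (by fun_prop)
    (.of_forall (norm_indicator_orthogonalSpanProdEquiv_le hw hC0 hC)) hBp
    (ae_continuousAt_indicator_orthogonalSpanProdEquiv hconv hw hx₀ hx₀w hf) using 1
  · ext T
    rw [← hpre, ← Measure.volume_eq_prod,
      he.setIntegral_preimage_emb e.measurableEmbedding (K.indicator f),
      setIntegral_indicator hKmeas, Set.inter_comm]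
  · rw [← integral_indicator hKH]
    exact integral_congr_ae (.of_forall fun y =>
      (Set.indicator_smul_apply _ _ _ y).trans (congrArg _ (hF0 y).symm))

lemma hasDerivAt_setIntegral_inner_le_mul {P : Set E} (hclosed : IsClosed P)
    (hconv : Convex ℝ P) {u w : E} (hw : ‖w‖ = 1) (huw : ⟪u, w⟫ = 0) {x₀ : E}
    (hx₀ : x₀ ∈ interior P) (hx₀w : ⟪x₀, w⟫ = 0)
    (hbdd : Bornology.IsBounded (P ∩ {x | ⟪x, w⟫ ≤ 0})) {f : E → G} (hf : ContinuousOn f P) :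
    HasDerivAt (fun T : ℝ => ∫ x in P ∩ {x | ⟪x, w⟫ ≤ T * max ⟪x, u⟫ 0}, f x)
      (∫ y in {y : (ℝ ∙ w)ᗮ | (y : E) ∈ P}, max ⟪(y : E), u⟫ 0 • f y) 0 := by
  obtain ⟨R, hR, hsub⟩ := exists_eventually_inter_inner_le_mul_subset_closedBall hclosed
    (hconv.starConvex (interior_subset hx₀)) hx₀w hbdd u
  have hinter (S : Set E) (hS : P ∩ S ⊆ Metric.closedBall x₀ R) :
      P ∩ S = P ∩ Metric.closedBall x₀ R ∩ S := by
    rw [Set.inter_right_comm, Set.inter_eq_left.2 hS]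
  have hslice : {y : (ℝ ∙ w)ᗮ | (y : E) ∈ P} =
      {y : (ℝ ∙ w)ᗮ | (y : E) ∈ P ∩ Metric.closedBall x₀ R} := by
    ext y
    refine ⟨fun hy => ⟨hy, hsub.self_of_nhds ⟨hy, ?_⟩⟩, And.left⟩
    simp [Submodule.mem_orthogonal_singleton_iff_inner_left.1 y.2]
  have hx₀K : x₀ ∈ interior (P ∩ Metric.closedBall x₀ R) := by
    rw [interior_inter]
    exact ⟨hx₀, Metric.ball_subset_interior_closedBall (Metric.mem_ball_self hR)⟩
  rw [hslice]
  refine (hasDerivAt_setIntegral_inner_le_mul_of_isCompact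
    ((isCompact_closedBall x₀ R).inter_left hclosed) (hconv.inter (convex_closedBall x₀ R)) hw hx₀K
    hx₀w (p := fun x => max ⟪x, u⟫ 0) (by fun_prop) (fun x q => ?_)
    (hf.mono Set.inter_subset_left)).congr_of_eventuallyEq ?_
  · rw [inner_add_left, real_inner_smul_left, real_inner_comm u w, huw, mul_zero, add_zero]
  · filter_upwards [hsub] with T hT
    rw [hinter _ hT]

lemma setOf_polarAngle_mem_Icc_ae_eq {P : Set E} (u : E) {w : E} (hw : w ≠ 0) {t : ℝ}
    (ht : |t| < Real.pi / 2) :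
    {x ∈ P | polarAngle ⟪x, u⟫ ⟪x, w⟫ ∈ Set.Icc (-Real.pi) t} =ᵐ[volume]
      (P ∩ {x | ⟪x, w⟫ ≤ Real.tan t * max ⟪x, u⟫ 0} : Set E) := by
  have hnull : volume ((ℝ ∙ w)ᗮ : Set E) = 0 := Measure.addHaar_submodule volume _ fun h =>
    hw (inner_self_eq_zero.1 (Submodule.mem_orthogonal_singleton_iff_inner_left.1
      (h ▸ Submodule.mem_top : w ∈ (ℝ ∙ w)ᗮ)))
  filter_upwards [compl_mem_ae_iff.2 hnull] with x hx
  have hxw : ⟪x, w⟫ ≠ 0 := fun h => hx (Submodule.mem_orthogonal_singleton_iff_inner_left.2 h)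
  exact propext (and_congr_right fun _ =>
    (and_iff_right (neg_pi_le_polarAngle _ _)).trans (polarAngle_le_iff hxw ht))

end Hinge

theorem stmt4_general {E : Type*} [NormedAddCommGroup E] [InnerProductSpace ℝ E]
    [FiniteDimensional ℝ E] [MeasurableSpace E] [BorelSpace E] {G : Type*} [NormedAddCommGroup G]
    [NormedSpace ℝ G] [CompleteSpace G] {P : Set E} (hclosed : IsClosed P) (hconv : Convex ℝ P)
    (hint : (interior P).Nonempty) {u w : E} (hw : ‖w‖ = 1) (huw : ⟪u, w⟫ = 0)
    (hneg : ∃ x ∈ P, ⟪x, w⟫ < 0) (hpos : ∃ x ∈ P, 0 < ⟪x, w⟫)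
    (hbdd : Bornology.IsBounded (P ∩ {x | ⟪x, w⟫ ≤ 0})) {f : E → G} (hf : ContinuousOn f P) :
    HasDerivAt
      (fun t => ∫ x in {x ∈ P | polarAngle ⟪x, u⟫ ⟪x, w⟫ ∈ Set.Icc (-Real.pi) t}, f x)
      (∫ y in {y : (ℝ ∙ w)ᗮ | (y : E) ∈ P}, max ⟪(y : E), u⟫ 0 • f y) 0 := by
  obtain ⟨x₀, hx₀, hx₀w⟩ := exists_mem_interior_eq_zero_of_convex hconv hint (innerSL ℝ w)
    (by simpa only [innerSL_apply_apply, real_inner_comm] using hneg)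
    (by simpa only [innerSL_apply_apply, real_inner_comm] using hpos)
  have htan : HasDerivAt Real.tan 1 0 := by
    simpa using Real.hasDerivAt_tan (x := 0) (by simp)
  have hderiv := (hasDerivAt_setIntegral_inner_le_mul hclosed hconv hw huw hx₀
    (real_inner_comm w x₀ ▸ hx₀w) hbdd hf).scomp_of_eq 0 htan Real.tan_zero.symm
  rw [one_smul] at hderiv
  refine hderiv.congr_of_eventuallyEq ?_
  have hsmall : ∀ᶠ t in nhds (0 : ℝ), |t| < Real.pi / 2 :=
    continuous_abs.continuousAt.eventually_lt continuousAt_const (by simp [Real.pi_pos])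
  filter_upwards [hsmall] with t ht
  exact setIntegral_congr_set (setOf_polarAngle_mem_Icc_ae_eq u (by
    rintro rfl
    simp at hw) ht)

/-- Lemma: differentiability with respect to hinging. Let `P ⊆ ℝ^d` be a
closed polyhedron with nonempty interior whose boundary contains the origin, `Z` a
`(d-2)`-dimensional subspace not meeting the interior of `P`, and `θ` the polar angle in the
plane `Zᗮ` (with orthonormal basis `u, w`). If `θ(P) = [a, b]` with `a < 0 < b`,
`a, b ∈ (-π, π)`, and `P ∩ {a ≤ θ ≤ 0}` is bounded, then for any `f` continuous on `P` the
function `g(t) = ∫_{K_t} f` with `K_t = {x ∈ P : θ(x) ∈ [-π, t]}` is differentiable at `0`. -/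
theorem stmt4 {d : ℕ} (P : Set (Euc d))
    (hpoly : ∃ (m : ℕ) (a : Fin m → Euc d) (c : Fin m → ℝ),
      (∀ i, a i ≠ 0) ∧ P = ⋂ i, {x : Euc d | ⟪a i, x⟫ ≤ c i})
    (hint : (interior P).Nonempty) (h0 : (0 : Euc d) ∈ frontier P)
    (Z : Submodule ℝ (Euc d)) (hZdim : Module.finrank ℝ Z = d - 2)
    (hZP : (Z : Set (Euc d)) ∩ interior P = ∅)
    (u w : Euc d) (hu : u ∈ Zᗮ) (hw : w ∈ Zᗮ) (hun : ‖u‖ = 1) (hwn : ‖w‖ = 1)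
    (huw : ⟪u, w⟫ = 0)
    (θ : Euc d → ℝ) (hθ : θ = fun x => polarAngle ⟪x, u⟫ ⟪x, w⟫)
    (a b : ℝ) (ha : a ∈ Set.Ioo (-Real.pi) Real.pi) (hb : b ∈ Set.Ioo (-Real.pi) Real.pi)
    (ha0 : a < 0) (h0b : 0 < b)
    (hrange : θ '' P = Set.Icc a b)
    (hbdd : Bornology.IsBounded (P ∩ {x : Euc d | a ≤ θ x ∧ θ x ≤ 0}))
    (f : Euc d → ℝ) (hf : ContinuousOn f P) :
    DifferentiableAt ℝ
      (fun t : ℝ => ∫ x in {x ∈ P | θ x ∈ Set.Icc (-Real.pi) t}, f x) 0 := by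
  subst hθ
  obtain ⟨m, α, γ, -, rfl⟩ := hpoly
  have hneg : ∃ x ∈ ⋂ i, {x : Euc d | ⟪α i, x⟫ ≤ γ i}, ⟪x, w⟫ < 0 := by
    obtain ⟨x, hx, rfl⟩ := hrange.symm.subset (Set.left_mem_Icc.2 (ha0.trans h0b).le)
    exact ⟨x, hx, snd_neg_of_polarAngle_mem_Ioo ⟨ha.1, ha0⟩⟩
  have hpos : ∃ x ∈ ⋂ i, {x : Euc d | ⟪α i, x⟫ ≤ γ i}, 0 < ⟪x, w⟫ := by
    obtain ⟨x, hx, rfl⟩ := hrange.symm.subset (Set.right_mem_Icc.2 (ha0.trans h0b).le)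
    exact ⟨x, hx, not_le.1 (mt polarAngle_nonpos_iff.2 h0b.not_ge)⟩
  exact (stmt4_general (isClosed_iInter_inner_le α γ) (convex_iInter_inner_le α γ) hint hwn huw
    hneg hpos (hbdd.subset fun x hx => ⟨hx.1, (hrange.subset ⟨x, hx.1, rfl⟩).1,
      polarAngle_nonpos_iff.2 hx.2⟩) hf).differentiableAt

end
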